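/- Let D be a strong digraph of order n ≥ 3 in which n−1 vertices have degree at least n. Then D is Hamiltonian or D contains a directed cycle of length n−1; moreover, D has a directed cycle that contains all the vertices of degree at least n. -/

import Mathlib

/-! A digraph on a vertex type `V` is given by its arc relation `A : V → V → Prop`
(this automatically forbids multiple arcs); looplessness is expressed by the
hypothesis `Irreflexive A`. -/

/-- The degree of `x`: its out-degree plus its in-degree. -/
noncomputable def degree {V : Type*} (A : V → V → Prop) (x : V) : ℕ :=
  {y | A x y}.ncard + {y | A y x}.ncard

/-- `degreeIn A x S` is the number of arcs between `x` and vertices of `S`,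
in both directions. -/
noncomputable def degreeIn {V : Type*} (A : V → V → Prop) (x : V) (S : Set V) : ℕ :=
  {y ∈ S | A x y}.ncard + {y ∈ S | A y x}.ncard

/-- `c : Fin m → V` is a directed cycle of length `m` (indices taken mod `m`). -/
def IsCycle {V : Type*} (A : V → V → Prop) {m : ℕ} (c : Fin m → V) : Prop :=
  2 ≤ m ∧ Function.Injective c ∧
    ∀ i : Fin m, A (c i) (c ⟨(i.val + 1) % m, Nat.mod_lt _ i.pos⟩)

/-- `p : Fin m → V` is a directed path on `m` vertices (of length `m - 1`). -/
def IsPath {V : Type*} (A : V → V → Prop) {m : ℕ} (p : Fin m → V) : Prop :=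
  Function.Injective p ∧ ∀ (i : Fin m) (h : i.val + 1 < m), A (p i) (p ⟨i.val + 1, h⟩)

/-- A digraph is Hamiltonian if it has a directed cycle through all of its vertices. -/
def IsHamiltonian {V : Type*} [Fintype V] (A : V → V → Prop) : Prop :=
  ∃ c : Fin (Fintype.card V) → V, IsCycle A c ∧ Function.Surjective c

/-- Reachability by a directed path staying inside the set `S`. -/
def ReachIn {V : Type*} (A : V → V → Prop) (S : Set V) : V → V → Prop :=
  Relation.ReflTransGen (fun u v => u ∈ S ∧ v ∈ S ∧ A u v)

/-- A digraph is strong if every vertex is reachable from every other by a directed path. -/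
def IsStrong {V : Type*} (A : V → V → Prop) : Prop :=
  ∀ x y : V, Relation.ReflTransGen A x y

/-- A digraph is `k`-strong if it has at least `k + 1` vertices and the deletion of
any set of at most `k - 1` vertices leaves a strong digraph. -/
def IsKStrong {V : Type*} [Fintype V] (A : V → V → Prop) (k : ℕ) : Prop :=
  k + 1 ≤ Fintype.card V ∧
    ∀ S : Set V, S.ncard ≤ k - 1 → ∀ x ∈ Sᶜ, ∀ y ∈ Sᶜ, ReachIn A Sᶜ x y

/-!
Let `M` be the set of vertices of large degree and `C` a cycle that meets `M` in a set which is
maximal for inclusion. Suppose that some `v ∈ M` off `C` receives an arc from `x ∈ C`. By strong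
connectivity `v` reaches `C` again, at `y` say, so `C` consists of a path `L` from `y` to `x` and a
gap `G` which is bypassed. Among all such bypasses choose one with shortest gap, and enlarge `L` by
insertions to a path `T` from `y` to `x` within `C`. Some `u ∈ M ∩ C` is missed by `T`, as otherwise
`T` and the bypass would form a better cycle; note that `u ∈ G`. Now count arcs:

* `v` is not joined to `G` and cannot be inserted in `L`, so at most `|L| + 1` arcs join it to `C`;
* `u` cannot be inserted in `T`, so at most `2|C| - |L| - 1` arcs join it to `C`;
* off `C`, no path of length two leads from `v` to `u`, nor from `u` to `v` through a vertex of `M`,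
  since either would shorten the gap.

The resulting bound on `d(u) + d(v)` contradicts the degree condition. Hence no arc leads from `C`
to `M \ C` and, reversing all arcs, none from `M \ C` to `C`; counting again for `u ∈ M ∩ C` and
`v ∈ M \ C` gives `M ⊆ C`. Only degree sums of non-adjacent pairs in `M` matter, and for `M` the
whole vertex set the argument gives Meyniel's theorem.
-/

section Degree

variable {V : Type*} {A : V → V → Prop} {u v x : V} {S N : Set V}

theorem degree_eq_degreeIn_univ (A : V → V → Prop) (x : V) :
    degree A x = degreeIn A x Set.univ := by
  simp only [degree, degreeIn, Set.mem_univ, true_and]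

theorem degree_swap (A : V → V → Prop) (x : V) : degree (Function.swap A) x = degree A x :=
  Nat.add_comm _ _

variable [Finite V]

theorem degreeIn_le_degreeIn {T : Set V} (h : ∀ a ∈ S, A x a ∨ A a x → a ∈ T) :
    degreeIn A x S ≤ degreeIn A x T :=
  Nat.add_le_add (Set.ncard_le_ncard fun a ha => ⟨h a ha.1 (.inl ha.2), ha.2⟩)
    (Set.ncard_le_ncard fun a ha => ⟨h a ha.1 (.inr ha.2), ha.2⟩)

theorem degreeIn_le_degreeIn_sdiff_singleton (h₁ : ¬ A x v) (h₂ : ¬ A v x) (S : Set V) :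
    degreeIn A x S ≤ degreeIn A x (S \ {v}) :=
  degreeIn_le_degreeIn fun a ha hxa => ⟨ha, by rintro rfl; exact hxa.elim h₁ h₂⟩

theorem degreeIn_le_two_mul_ncard (A : V → V → Prop) (x : V) (S : Set V) :
    degreeIn A x S ≤ 2 * S.ncard := by
  have h₁ : {y ∈ S | A x y}.ncard ≤ S.ncard := Set.ncard_le_ncard (Set.sep_subset ..)
  have h₂ : {y ∈ S | A y x}.ncard ≤ S.ncard := Set.ncard_le_ncard (Set.sep_subset ..)
  unfold degreeIn
  omega

theorem degreeIn_inter_add_degreeIn_sdiff (A : V → V → Prop) (x : V) (S T : Set V) :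
    degreeIn A x (S ∩ T) + degreeIn A x (S \ T) = degreeIn A x S := by
  have split (p : V → Prop) :
      {y ∈ S ∩ T | p y}.ncard + {y ∈ S \ T | p y}.ncard = {y ∈ S | p y}.ncard := by
    rw [← Set.ncard_inter_add_ncard_sdiff_eq_ncard {y ∈ S | p y} T]
    congr 2 <;> ext <;> simp <;> tauto
  have hout := split (A x ·)
  have hin := split (A · x)
  unfold degreeIn
  omega

theorem degreeIn_add_degreeIn_compl (A : V → V → Prop) (x : V) (S : Set V) :
    degreeIn A x S + degreeIn A x Sᶜ = degree A x := by
  rw [degree_eq_degreeIn_univ, ← degreeIn_inter_add_degreeIn_sdiff A x Set.univ S,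
    Set.univ_inter, Set.compl_eq_univ_sdiff]

theorem ncard_out_add_ncard_in_le (h : ∀ a ∈ S, a ∈ N → A u a → ¬ A a v) :
    {a ∈ S | A u a}.ncard + {a ∈ S | A a v}.ncard ≤ S.ncard + (S \ N).ncard := by
  rw [← Set.ncard_union_add_ncard_inter]
  refine Nat.add_le_add (Set.ncard_le_ncard (Set.union_subset ?_ ?_)) (Set.ncard_le_ncard ?_)
  · exact Set.sep_subset ..
  · exact Set.sep_subset ..
  · exact fun a ⟨⟨haS, hua⟩, _, hav⟩ => ⟨haS, fun haN => h a haS haN hua hav⟩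

end Degree

section Insertion

theorem ncard_setOf_mem_of_nodup {α : Type*} {l : List α} (hl : l.Nodup) :
    {a | a ∈ l}.ncard = l.length := by
  classical
  rw [← List.coe_toFinset, Set.ncard_coe_finset, List.toFinset_card_of_nodup hl]

theorem ncard_setOf_mem_and_le_countP {α : Type*} (l : List α) (p : α → Bool) :
    {a | a ∈ l ∧ p a}.ncard ≤ l.countP p := by
  classical
  have h : {a | a ∈ l ∧ p a} = ((l.filter p).toFinset : Set α) := by
    ext; simp only [List.coe_toFinset, List.mem_filter, Set.mem_ofPred_eq]
  rw [h, Set.ncard_coe_finset, List.countP_eq_length_filter]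
  exact List.toFinset_card_le _

theorem countP_add_countP_le_of_isChain {α : Type*} {p q : α → Bool} {l : List α}
    (h : l.IsChain fun a b => p a → ¬ q b) : l.countP p + l.countP q ≤ l.length + 1 := by
  -- Pair `p a` with `q b` for consecutive `a, b`: at most one of the two holds.
  have htail (a : α) (t : List α) (h : (a :: t).IsChain fun a b => p a → ¬ q b) :
      (a :: t).countP p + t.countP q ≤ t.length + 1 := by
    induction t generalizing a with
    | nil => exact List.countP_le_length
    | cons b t ih =>
      have hab := (List.isChain_cons_cons.1 h).1
      have hb := ih b (List.isChain_cons_cons.1 h).2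
      rw [List.countP_cons, List.countP_cons (p := q), List.length_cons]
      split_ifs <;> first | omega | tauto
  cases l with
  | nil => simp
  | cons a t =>
    have := htail a t h
    rw [List.countP_cons (p := q), List.length_cons]
    split_ifs <;> omega

variable {V : Type*} {A : V → V → Prop} {u : V} {l : List V}

theorem degreeIn_le_length_add_one (h : l.IsChain fun a b => A a u → ¬ A u b) :
    degreeIn A u {a | a ∈ l} ≤ l.length + 1 := by
  classical
  have hout := ncard_setOf_mem_and_le_countP l (A u ·)
  have hin := ncard_setOf_mem_and_le_countP l (A · u)
  have := countP_add_countP_le_of_isChain (p := (A · u)) (q := (A u ·)) (by simpa using h)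
  simp only [decide_eq_true_eq] at hout hin
  simp only [degreeIn, Set.mem_ofPred_eq]
  omega

theorem degreeIn_add_length_add_one_le [Finite V] (hirr : ∀ x, ¬ A x x) {C : Set V}
    (hl : l.Nodup) (hlC : {a | a ∈ l} ⊆ C) (huC : u ∈ C) (hul : u ∉ l)
    (h : l.IsChain fun a b => A a u → ¬ A u b) :
    degreeIn A u C + l.length + 1 ≤ 2 * C.ncard := by
  have hdegl := degreeIn_le_length_add_one h
  have hrest := (degreeIn_le_degreeIn_sdiff_singleton (hirr u) (hirr u) (C \ {a | a ∈ l})).trans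
    (degreeIn_le_two_mul_ncard ..)
  have hsplit := degreeIn_inter_add_degreeIn_sdiff A u C {a | a ∈ l}
  have hu := Set.ncard_sdiff_singleton_add_one (show u ∈ C \ {a | a ∈ l} from ⟨huC, hul⟩)
  have hcard := Set.ncard_sdiff_add_ncard_of_subset hlC
  rw [Set.inter_eq_right.2 hlC] at hsplit
  rw [ncard_setOf_mem_of_nodup hl] at hcard
  omega

end Insertion

section ListPath

/-- The vertices of `l`, in this order, form a directed path from `x` to `y`. Lists are preferred
to the functions `Fin m → V` of `IsPath` since paths will be cut and spliced. -/
structure IsListPath {V : Type*} (A : V → V → Prop) (x y : V) (l : List V) : Prop where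
  nodup : l.Nodup
  isChain : l.IsChain A
  head?_eq : l.head? = some x
  getLast?_eq : l.getLast? = some y

/-- The vertices of `l`, in this order, form a directed cycle, the closing arc going from the last
vertex to the first. -/
def IsListCycle {V : Type*} (A : V → V → Prop) (l : List V) : Prop :=
  ∃ x y, IsListPath A x y l ∧ A y x

variable {V : Type*} {A : V → V → Prop} {x y p q u : V} {l l₁ l₂ : List V}

namespace IsListPath

theorem singleton (A : V → V → Prop) (x : V) : IsListPath A x x [x] :=
  ⟨List.nodup_singleton x, List.isChain_singleton x, rfl, rfl⟩

theorem append (h₁ : IsListPath A x p l₁) (h₂ : IsListPath A q y l₂) (hpq : A p q)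
    (hd : l₁.Disjoint l₂) : IsListPath A x y (l₁ ++ l₂) where
  nodup := h₁.nodup.append h₂.nodup hd
  isChain := List.isChain_append.2 ⟨h₁.isChain, h₂.isChain, by
    simpa only [h₁.getLast?_eq, h₂.head?_eq, Option.mem_some_iff, forall_eq']⟩
  head?_eq := by rw [List.head?_append, h₁.head?_eq, Option.some_or]
  getLast?_eq := by rw [List.getLast?_append, h₂.getLast?_eq, Option.some_or]

theorem exists_split (h : IsListPath A x y (l₁ ++ l₂)) (hl₁ : l₁ ≠ []) (hl₂ : l₂ ≠ []) :
    ∃ p q, IsListPath A x p l₁ ∧ IsListPath A q y l₂ ∧ A p q := by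
  obtain ⟨hc₁, hc₂, hjoin⟩ := List.isChain_append.1 h.isChain
  have hp := List.getLast?_eq_some_getLast hl₁
  have hq := List.head?_eq_some_head hl₂
  refine ⟨l₁.getLast hl₁, l₂.head hl₂, ⟨h.nodup.of_append_left, hc₁, ?_, hp⟩,
    ⟨h.nodup.of_append_right, hc₂, hq, ?_⟩, hjoin _ hp _ hq⟩
  · rw [← h.head?_eq, List.head?_append_of_ne_nil _ hl₁]
  · rw [← h.getLast?_eq, List.getLast?_append_of_ne_nil _ hl₂]

theorem reverse (h : IsListPath A x y l) : IsListPath (Function.swap A) y x l.reverse where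
  nodup := List.nodup_reverse.2 h.nodup
  isChain := List.isChain_reverse.2 h.isChain
  head?_eq := by rw [List.head?_reverse, h.getLast?_eq]
  getLast?_eq := by rw [List.getLast?_reverse, h.head?_eq]

theorem insert {s t : List V} {a b : V} (h : IsListPath A x y (s ++ a :: b :: t))
    (hu : u ∉ s ++ a :: b :: t) (hau : A a u) (hub : A u b) :
    IsListPath A x y (s ++ a :: u :: b :: t) := by
  have heq : s ++ a :: b :: t = (s ++ [a]) ++ b :: t := by simp
  obtain ⟨p, q, hs, ht, -⟩ := (heq ▸ h).exists_split (by simp) (by simp)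
  obtain rfl : a = p := by simpa using hs.getLast?_eq
  obtain rfl : b = q := by simpa using ht.head?_eq
  rw [heq, List.mem_append, not_or] at hu
  have hut : IsListPath A u y ([u] ++ b :: t) :=
    (singleton A u).append ht hub (List.singleton_disjoint.2 hu.2)
  have hd : (s ++ [a]).Disjoint ([u] ++ b :: t) :=
    List.disjoint_append_right.2 ⟨(List.singleton_disjoint.2 hu.1).symm,
      List.disjoint_of_nodup_append (heq ▸ h.nodup)⟩
  simpa using hs.append hut hau hd

theorem exists_saturated [Finite V] {C : Set V} (h : IsListPath A x y l)
    (hl : ∀ a ∈ l, a ∈ C) :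
    ∃ T, IsListPath A x y T ∧ l ⊆ T ∧ (∀ a ∈ T, a ∈ C) ∧
      ∀ u ∈ C, u ∉ T → T.IsChain fun a b => A a u → ¬ A u b := by
  obtain ⟨T, ⟨hT, hlT, hTC⟩, hmax⟩ := exists_maximalFor_of_wellFoundedGT
    (fun T => IsListPath A x y T ∧ l ⊆ T ∧ ∀ a ∈ T, a ∈ C) (fun T => {a | a ∈ T})
    ⟨l, h, List.Subset.refl l, hl⟩
  refine ⟨T, hT, hlT, hTC, fun u huC huT =>
    List.isChain_iff_forall_rel_of_append_cons_cons.2 ?_⟩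
  rintro a b s t rfl hau hub
  have hmem (c : V) : c ∈ s ++ a :: u :: b :: t ↔ c = u ∨ c ∈ s ++ a :: b :: t := by
    simp only [List.mem_append, List.mem_cons]; tauto
  refine huT (hmax ⟨hT.insert huT hau hub, fun c hc => (hmem c).2 (.inr (hlT hc)), fun c hc => ?_⟩
    (fun c hc => (hmem c).2 (.inr hc)) ((hmem u).2 (.inl rfl)))
  rcases (hmem c).1 hc with rfl | hc
  · exact huC
  · exact hTC c hc

end IsListPath

namespace IsListCycle

theorem append_comm (h : IsListCycle A (l₁ ++ l₂)) : IsListCycle A (l₂ ++ l₁) := by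
  rcases eq_or_ne l₁ [] with rfl | hl₁
  · simpa only [List.nil_append, List.append_nil] using h
  rcases eq_or_ne l₂ [] with rfl | hl₂
  · simpa only [List.nil_append, List.append_nil] using h
  obtain ⟨x, y, hpath, hyx⟩ := h
  obtain ⟨p, q, h₁, h₂, hpq⟩ := hpath.exists_split hl₁ hl₂
  exact ⟨q, p, h₂.append h₁ hyx (List.disjoint_of_nodup_append hpath.nodup).symm, hpq⟩

theorem exists_rotation (h : IsListCycle A l) (hx : x ∈ l) (hy : y ∈ l) :
    ∃ L G, IsListCycle A (L ++ G) ∧ (L ++ G).Perm l ∧ L.head? = some y ∧ L.getLast? = some x := by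
  obtain ⟨s, t, rfl⟩ := List.append_of_mem hy
  have hperm : (y :: t ++ s).Perm (s ++ y :: t) := List.perm_append_comm
  obtain ⟨L, G, hLG⟩ := List.append_of_mem (hperm.mem_iff.2 hx)
  have heq : L ++ [x] ++ G = y :: t ++ s := by simp [hLG]
  refine ⟨L ++ [x], G, heq ▸ h.append_comm, heq ▸ hperm, ?_, List.getLast?_concat⟩
  have hhead := congrArg List.head? heq
  rwa [List.head?_append_of_ne_nil _ (List.append_ne_nil_of_right_ne_nil L (List.cons_ne_nil x []))]
    at hhead

theorem reverse (h : IsListCycle A l) : IsListCycle (Function.swap A) l.reverse :=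
  let ⟨x, y, hpath, hyx⟩ := h
  ⟨y, x, hpath.reverse, hyx⟩

theorem insert {s t : List V} {a b : V} (h : IsListCycle A (s ++ a :: b :: t))
    (hu : u ∉ s ++ a :: b :: t) (hau : A a u) (hub : A u b) :
    IsListCycle A (s ++ a :: u :: b :: t) :=
  let ⟨x, y, hpath, hyx⟩ := h
  ⟨x, y, hpath.insert hu hau hub, hyx⟩

theorem nodup (h : IsListCycle A l) : l.Nodup :=
  let ⟨_, _, hpath, _⟩ := h
  hpath.nodup

theorem two_le_length (hirr : ∀ x, ¬ A x x) (h : IsListCycle A l) : 2 ≤ l.length := by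
  obtain ⟨x, y, hpath, hyx⟩ := h
  match l, hpath with
  | [], hpath => simpa using hpath.head?_eq
  | [a], hpath =>
    obtain rfl : a = x := by simpa using hpath.head?_eq
    obtain rfl : a = y := by simpa using hpath.getLast?_eq
    exact absurd hyx (hirr a)
  | _ :: _ :: _, _ => simp

theorem isCycle_get (hirr : ∀ x, ¬ A x x) (h : IsListCycle A l) : IsCycle A l.get := by
  refine ⟨h.two_le_length hirr, List.nodup_iff_injective_get.1 h.nodup, fun i => ?_⟩
  obtain ⟨x, y, hpath, hyx⟩ := h
  simp only [List.get_eq_getElem]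
  rcases Nat.lt_or_ge (i + 1) l.length with hi | hi
  · simp only [Nat.mod_eq_of_lt hi]
    exact List.isChain_iff_getElem.1 hpath.isChain i hi
  · have hlast : i + 1 = l.length := le_antisymm i.isLt hi
    have hy : l[(i : ℕ)] = y := by
      simpa [List.getLast?_eq_getElem?, ← hlast] using hpath.getLast?_eq
    have hx : l[0]'i.pos = x := by
      exact Option.some_injective _ (by rw [← hpath.head?_eq, List.head?_eq_getElem?,
        List.getElem?_eq_getElem])
    simpa only [hlast, Nat.mod_self, hx, hy] using hyx

end IsListCycle

end ListPath

section Reachability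

variable {V : Type*} {A : V → V → Prop} {S : Set V} {a b v : V}

theorem ReachIn.exists_isListPath (h : ReachIn A S a b) (ha : a ∈ S) :
    ∃ P, IsListPath A a b P ∧ ∀ x ∈ P, x ∈ S := by
  induction h using Relation.ReflTransGen.head_induction_on with
  | refl => exact ⟨[b], .singleton A b, by simpa using ha⟩
  | @head a c hac _ ih =>
    obtain ⟨P, hP, hPS⟩ := ih hac.2.1
    by_cases haP : a ∈ P
    · obtain ⟨s, t, rfl⟩ := List.append_of_mem haP
      refine ⟨a :: t, ⟨hP.nodup.of_append_right, hP.isChain.right_of_append, rfl, ?_⟩,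
        fun x hx => hPS x (List.mem_append_right s hx)⟩
      rw [← hP.getLast?_eq, List.getLast?_append_of_ne_nil _ (List.cons_ne_nil a t)]
    · exact ⟨[a] ++ P, (IsListPath.singleton A a).append hP hac.2.2
        (List.singleton_disjoint.2 haP), by simpa using ⟨hac.1, hPS⟩⟩

/-- `y` can be reached from `v` by a path all of whose vertices, except perhaps `y`, avoid `S`.
It is used for `v` outside a cycle with vertex set `S` and `y` on the cycle. -/
def ReturnsTo {V : Type*} (A : V → V → Prop) (S : Set V) (v y : V) : Prop :=
  ∃ w, ReachIn A Sᶜ v w ∧ A w y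

theorem IsStrong.exists_returnsTo (h : IsStrong A) (hv : v ∉ S) (hS : S.Nonempty) :
    ∃ y ∈ S, ReturnsTo A S v y := by
  obtain ⟨c, hc⟩ := hS
  induction h v c using Relation.ReflTransGen.head_induction_on with
  | refl => exact absurd hc hv
  | @head a b hab _ ih =>
    by_cases hb : b ∈ S
    · exact ⟨b, hb, a, .refl, hab⟩
    · obtain ⟨y, hy, w, hbw, hwy⟩ := ih hb
      exact ⟨y, hy, w, .head ⟨hv, hb, hab⟩ hbw, hwy⟩

theorem IsStrong.swap (h : IsStrong A) : IsStrong (Function.swap A) :=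
  fun x y => Relation.reflTransGen_swap.2 (h y x)

theorem IsStrong.exists_isListCycle_mem [Nontrivial V] (h : IsStrong A) (v : V) :
    ∃ C, IsListCycle A C ∧ v ∈ C := by
  obtain ⟨b, hbv⟩ := exists_ne v
  obtain ⟨c, -, hcv⟩ := (h b v).cases_tail.resolve_left hbv.symm
  have hvc : ReachIn A Set.univ v c :=
    Relation.ReflTransGen.mono (fun _ _ hab => ⟨trivial, trivial, hab⟩) _ _ (h v c)
  obtain ⟨P, hP, -⟩ := hvc.exists_isListPath trivial
  exact ⟨P, ⟨v, c, hP, hcv⟩, List.mem_of_head? hP.head?_eq⟩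

end Reachability

section MaximalCycle

/-- `C` is a directed cycle such that no directed cycle contains strictly more vertices of `M`, in
the sense of inclusion. -/
def IsMaximalCycle {V : Type*} (A : V → V → Prop) (M : Set V) (C : List V) : Prop :=
  MaximalFor (IsListCycle A) (fun l => M ∩ {a | a ∈ l}) C

variable {V : Type*} {A : V → V → Prop} {M : Set V} {C l : List V} {v : V}

theorem exists_isMaximalCycle [Finite V] [Nontrivial V] (h : IsStrong A) (M : Set V) :
    ∃ C, IsMaximalCycle A M C :=
  let ⟨C, hC, _⟩ := h.exists_isListCycle_mem (Classical.arbitrary V)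
  exists_maximalFor_of_wellFoundedGT _ _ ⟨C, hC⟩

namespace IsMaximalCycle

theorem mem (h : IsMaximalCycle A M C) (hl : IsListCycle A l) (hCl : ∀ a ∈ M, a ∈ C → a ∈ l)
    (hvM : v ∈ M) (hvl : v ∈ l) : v ∈ C :=
  (h.2 hl (fun a ⟨haM, haC⟩ => ⟨haM, hCl a haM haC⟩) ⟨hvM, hvl⟩).2

theorem of_perm (h : IsMaximalCycle A M C) (hl : IsListCycle A l) (hp : l.Perm C) :
    IsMaximalCycle A M l :=
  ⟨hl, fun _ hl' hle _ ⟨haM, hal'⟩ =>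
    ⟨haM, hp.mem_iff.2 (h.mem hl' (fun _ hbM hbC => (hle ⟨hbM, hp.mem_iff.2 hbC⟩).2) haM hal')⟩⟩

theorem reverse (h : IsMaximalCycle A M C) : IsMaximalCycle (Function.swap A) M C.reverse := by
  refine ⟨h.1.reverse, fun l hl hle a ⟨haM, hal⟩ => ⟨haM, List.mem_reverse.2 ?_⟩⟩
  exact h.mem hl.reverse (fun b hbM hbC => List.mem_reverse.2 (hle ⟨hbM, List.mem_reverse.2 hbC⟩).2)
    haM (List.mem_reverse.2 hal)

theorem exists_mem_of_notMem [Nontrivial V] (h : IsMaximalCycle A M C) (hstrong : IsStrong A)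
    (hvM : v ∈ M) (hv : v ∉ C) : ∃ u ∈ C, u ∈ M := by
  by_contra! hCM
  obtain ⟨l, hl, hvl⟩ := hstrong.exists_isListCycle_mem v
  exact hv (h.mem hl (fun a haM haC => absurd haM (hCM a haC)) hvM hvl)

end IsMaximalCycle

end MaximalCycle

section Bypass

/-- A bypass of the cycle `L ++ G`, where `L` runs from `y` to `x`: one can leave the cycle along
the arc from `x` to `v` and come back to it at `y`, so that the gap `G` is skipped. -/
structure IsBypass {V : Type*} (A : V → V → Prop) (L G : List V) (x v y : V) : Prop where
  isListCycle : IsListCycle A (L ++ G)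
  head?_eq : L.head? = some y
  getLast?_eq : L.getLast? = some x
  notMem : v ∉ L ++ G
  adj : A x v
  returnsTo : ReturnsTo A {a | a ∈ L ++ G} v y

/-- A bypass that starts at a vertex of `M` and whose gap is shortest among all such bypasses of
cycles with the same vertices. -/
structure IsTightBypass {V : Type*} (A : V → V → Prop) (M : Set V) (L G : List V) (x v y : V) : Prop
    extends IsBypass A L G x v y where
  mem : v ∈ M
  length_le : ∀ {L' G' : List V} {x' v' y' : V}, IsBypass A L' G' x' v' y' → v' ∈ M →
    (L' ++ G').Perm (L ++ G) → G.length ≤ G'.length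

variable {V : Type*} {A : V → V → Prop} {M : Set V} {L G G₁ G₂ : List V} {x v y u v' : V}

namespace IsBypass

theorem isListPath (h : IsBypass A L G x v y) : IsListPath A y x L :=
  let ⟨_, _, hpath, _⟩ := h.isListCycle
  ⟨hpath.nodup.of_append_left, hpath.isChain.left_of_append, h.head?_eq, h.getLast?_eq⟩

theorem of_returnsTo_gap (h : IsBypass A L (G₁ ++ u :: G₂) x v y)
    (hvu : ReturnsTo A {a | a ∈ L ++ (G₁ ++ u :: G₂)} v u) :
    IsBypass A (u :: G₂ ++ L) G₁ x v u := by
  have hmem (a : V) : a ∈ u :: G₂ ++ L ++ G₁ ↔ a ∈ L ++ (G₁ ++ u :: G₂) := by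
    simp only [List.mem_append, List.mem_cons]; tauto
  refine ⟨?_, rfl, ?_, mt (hmem v).1 h.notMem, h.adj, by simpa only [hmem] using hvu⟩
  · rw [List.append_assoc]
    exact IsListCycle.append_comm (by simpa only [List.append_assoc] using h.isListCycle)
  · rw [List.getLast?_append, h.getLast?_eq, Option.some_or]

theorem of_adj_gap (h : IsBypass A L (G₁ ++ u :: G₂) x v y) (hv' : v' ∉ L ++ (G₁ ++ u :: G₂))
    (huv' : A u v') (hv'v : ReachIn A {a | a ∈ L ++ (G₁ ++ u :: G₂)}ᶜ v' v) :
    IsBypass A (L ++ G₁ ++ [u]) G₂ u v' y := by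
  have heq : L ++ (G₁ ++ u :: G₂) = L ++ G₁ ++ [u] ++ G₂ := by simp
  obtain ⟨w, hvw, hwy⟩ := h.returnsTo
  rw [heq] at hv' hv'v hvw
  refine ⟨heq ▸ h.isListCycle, ?_, List.getLast?_concat, hv', huv', w, hv'v.trans hvw, hwy⟩
  rw [List.append_assoc, List.head?_append, h.head?_eq, Option.some_or]

theorem exists_isTightBypass (h : IsBypass A L G x v y) (hvM : v ∈ M) :
    ∃ L' G' x' v' y', IsTightBypass A M L' G' x' v' y' ∧ (L' ++ G').Perm (L ++ G) := by
  induction hG : G.length using Nat.strong_induction_on generalizing L G x v y with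
  | _ m ih =>
  by_cases htight : ∃ L' G' x' v' y', IsBypass A L' G' x' v' y' ∧ v' ∈ M ∧
      (L' ++ G').Perm (L ++ G) ∧ G'.length < G.length
  · obtain ⟨L', G', x', v', y', h', hv'M, hp, hlt⟩ := htight
    obtain ⟨L'', G'', x'', v'', y'', h'', hp'⟩ := ih _ (hG ▸ hlt) h' hv'M rfl
    exact ⟨L'', G'', x'', v'', y'', h'', hp'.trans hp⟩
  · exact ⟨L, G, x, v, y, ⟨h, hvM, fun h' hv'M hp => Nat.le_of_not_lt fun hlt =>
      htight ⟨_, _, _, _, _, h', hv'M, hp, hlt⟩⟩, .refl _⟩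

theorem exists_gap_vertex [Finite V] (hirr : ∀ x, ¬ A x x) (h : IsBypass A L G x v y)
    (hmax : IsMaximalCycle A M (L ++ G)) (hvM : v ∈ M) :
    ∃ u ∈ G, u ∈ M ∧
      degreeIn A u {a | a ∈ L ++ G} + L.length + 1 ≤ 2 * {a | a ∈ L ++ G}.ncard := by
  obtain ⟨T, hT, hLT, hTC, hsat⟩ := h.isListPath.exists_saturated (C := {a | a ∈ L ++ G})
    fun a ha => List.mem_append_left G ha
  obtain ⟨u, huC, huM, huT⟩ : ∃ u ∈ L ++ G, u ∈ M ∧ u ∉ T := by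
    -- Otherwise closing `T` through the bypass gives a cycle with more vertices of `M`.
    by_contra! hall
    obtain ⟨w, hvw, hwy⟩ := h.returnsTo
    obtain ⟨P, hP, hPC⟩ := hvw.exists_isListPath h.notMem
    have hcycle : IsListCycle A (T ++ P) :=
      ⟨y, w, hT.append hP h.adj fun a haT haP => hPC a haP (hTC a haT), hwy⟩
    exact h.notMem (hmax.mem hcycle
      (fun a haM haC => List.mem_append_left P (hall a haC haM)) hvM
      (List.mem_append_right T (List.mem_of_head? hP.head?_eq)))
  have huG : u ∈ G := (List.mem_append.1 huC).resolve_left fun huL => huT (hLT huL)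
  have hdegu := degreeIn_add_length_add_one_le hirr hT.nodup hTC huC huT (hsat u huC huT)
  have hlen := (h.isListPath.nodup.subperm hLT).length_le
  exact ⟨u, huG, huM, by omega⟩

end IsBypass

namespace IsTightBypass

theorem not_returnsTo (h : IsTightBypass A M L G x v y) (hu : u ∈ G) :
    ¬ ReturnsTo A {a | a ∈ L ++ G} v u := by
  intro hvu
  obtain ⟨G₁, G₂, rfl⟩ := List.append_of_mem hu
  have hperm : (u :: G₂ ++ L ++ G₁).Perm (L ++ (G₁ ++ u :: G₂)) := by
    rw [List.append_assoc, ← List.append_assoc L]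
    exact List.perm_append_comm
  have hle := h.length_le (h.toIsBypass.of_returnsTo_gap hvu) h.mem hperm
  simp only [List.length_append, List.length_cons] at hle
  omega

theorem not_adj_of_reachIn (h : IsTightBypass A M L G x v y) (hu : u ∈ G) (hv'M : v' ∈ M)
    (hv' : v' ∉ L ++ G) (hv'v : ReachIn A {a | a ∈ L ++ G}ᶜ v' v) : ¬ A u v' := by
  intro huv'
  obtain ⟨G₁, G₂, rfl⟩ := List.append_of_mem hu
  have hle := h.length_le (h.toIsBypass.of_adj_gap hv' huv' hv'v) hv'M (.of_eq (by simp))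
  simp only [List.length_append, List.length_cons] at hle
  omega

theorem not_adj_left (h : IsTightBypass A M L G x v y) (hu : u ∈ G) : ¬ A v u :=
  fun hvu => h.not_returnsTo hu ⟨v, .refl, hvu⟩

theorem not_adj_right (h : IsTightBypass A M L G x v y) (hu : u ∈ G) : ¬ A u v :=
  h.not_adj_of_reachIn hu h.mem h.notMem .refl

theorem degreeIn_le [Finite V] (h : IsTightBypass A M L G x v y)
    (hmax : IsMaximalCycle A M (L ++ G)) :
    degreeIn A v {a | a ∈ L ++ G} ≤ L.length + 1 := by
  have hnbr : ∀ a ∈ L ++ G, A v a ∨ A a v → a ∈ L := fun a ha hadj =>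
    (List.mem_append.1 ha).resolve_right fun haG =>
      hadj.elim (h.not_adj_left haG) (h.not_adj_right haG)
  have hins : L.IsChain fun a b => A a v → ¬ A v b := by
    refine List.isChain_iff_forall_rel_of_append_cons_cons.2 ?_
    rintro a b s t rfl hav hvb
    have heq : s ++ a :: b :: t ++ G = s ++ a :: b :: (t ++ G) := by simp
    have hcycle := (heq ▸ h.isListCycle).insert (heq ▸ h.notMem) hav hvb
    refine h.notMem (hmax.mem hcycle (fun c _ hc => ?_) h.mem (by simp))
    rw [heq] at hc
    simp only [List.mem_append, List.mem_cons] at hc ⊢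
    tauto
  exact (degreeIn_le_degreeIn hnbr).trans (degreeIn_le_length_add_one hins)

theorem degreeIn_compl_add_le [Finite V] (hirr : ∀ x, ¬ A x x)
    (h : IsTightBypass A M L G x v y) (hu : u ∈ G) :
    degreeIn A u {a | a ∈ L ++ G}ᶜ + degreeIn A v {a | a ∈ L ++ G}ᶜ + 2 ≤
      2 * {a | a ∈ L ++ G}ᶜ.ncard + Mᶜ.ncard := by
  set R := {a | a ∈ L ++ G}ᶜ
  have hvR : v ∈ R := h.notMem
  have hvau : ∀ a ∈ R \ {v}, a ∈ Set.univ → A v a → ¬ A a u := fun a ha _ hva hau =>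
    h.not_returnsTo hu ⟨a, .single ⟨hvR, ha.1, hva⟩, hau⟩
  have huav : ∀ a ∈ R \ {v}, a ∈ M → A u a → ¬ A a v := fun a ha haM hua hav =>
    h.not_adj_of_reachIn hu haM ha.1 (.single ⟨ha.1, hvR, hav⟩) hua
  have hout := ncard_out_add_ncard_in_le hvau
  have hin := ncard_out_add_ncard_in_le huav
  have hcard := Set.ncard_sdiff_singleton_add_one hvR
  have hM : ((R \ {v}) \ M).ncard ≤ Mᶜ.ncard := Set.ncard_le_ncard fun a ha => ha.2
  have hdegu := degreeIn_le_degreeIn_sdiff_singleton (h.not_adj_right hu) (h.not_adj_left hu) R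
  have hdegv := degreeIn_le_degreeIn_sdiff_singleton (hirr v) (hirr v) R
  rw [Set.sdiff_univ, Set.ncard_empty] at hout
  unfold degreeIn at *
  omega

end IsTightBypass

end Bypass

section Covering

/-- The degree condition of Meyniel's theorem for the pairs of vertices of `M`, strengthened by the
number of vertices outside `M`: non-adjacent vertices have degree sum at least `2n - 1 + |Mᶜ|`. -/
def MeynielOn {V : Type*} (A : V → V → Prop) (M : Set V) : Prop :=
  M.Pairwise fun u v => ¬ A u v → ¬ A v u →
    2 * Nat.card V + Mᶜ.ncard ≤ degree A u + degree A v + 1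

variable {V : Type*} {A : V → V → Prop} {M : Set V} {C : List V} {u v x : V}

theorem meynielOn_of_card_le_degree (hdeg : ∀ v ∈ M, Nat.card V ≤ degree A v)
    (hM : Mᶜ.ncard ≤ 1) : MeynielOn A M := by
  intro u hu v hv _ _ _
  have hdegu := hdeg u hu
  have hdegv := hdeg v hv
  omega

theorem MeynielOn.swap (h : MeynielOn A M) : MeynielOn (Function.swap A) M := by
  intro u hu v hv huv h₁ h₂
  simpa only [degree_swap] using h hu hv huv h₂ h₁

variable [Finite V]

theorem IsMaximalCycle.not_isBypass {L G : List V} {y : V} (hirr : ∀ x, ¬ A x x)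
    (hdeg : MeynielOn A M) (hmax : IsMaximalCycle A M (L ++ G)) (hvM : v ∈ M) :
    ¬ IsBypass A L G x v y := by
  intro hbypass
  obtain ⟨L, G, x, v, y, h, hperm⟩ := hbypass.exists_isTightBypass hvM
  replace hmax := hmax.of_perm h.isListCycle hperm
  obtain ⟨u, huG, huM, hdegu⟩ := h.exists_gap_vertex hirr hmax h.mem
  have hdegv := h.degreeIn_le hmax
  have hcompl := h.degreeIn_compl_add_le hirr huG
  have huv : u ≠ v := fun huv => h.notMem (List.mem_append_right L (huv ▸ huG))
  have hsum := hdeg huM h.mem huv (h.not_adj_right huG) (h.not_adj_left huG)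
  have hu := degreeIn_add_degreeIn_compl A u {a | a ∈ L ++ G}
  have hv := degreeIn_add_degreeIn_compl A v {a | a ∈ L ++ G}
  have hcard := Set.ncard_add_ncard_compl {a | a ∈ L ++ G}
  omega

theorem IsMaximalCycle.not_adj_of_notMem (hirr : ∀ x, ¬ A x x) (hstrong : IsStrong A)
    (hdeg : MeynielOn A M) (hmax : IsMaximalCycle A M C) (hx : x ∈ C) (hvM : v ∈ M)
    (hv : v ∉ C) : ¬ A x v := by
  intro hxv
  obtain ⟨y, hy, hvy⟩ := hstrong.exists_returnsTo (S := {a | a ∈ C}) hv ⟨x, hx⟩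
  obtain ⟨L, G, hcycle, hperm, hhead, hlast⟩ := hmax.1.exists_rotation hx hy
  refine (hmax.of_perm hcycle hperm).not_isBypass hirr hdeg hvM
    ⟨hcycle, hhead, hlast, mt hperm.mem_iff.1 hv, hxv, ?_⟩
  simpa only [hperm.mem_iff] using hvy

theorem degree_add_degree_add_four_le (hirr : ∀ x, ¬ A x x) (huv : u ≠ v) (h₁ : ¬ A u v)
    (h₂ : ¬ A v u) (hpath₁ : ∀ a ∈ M, A u a → ¬ A a v) (hpath₂ : ∀ a ∈ M, A v a → ¬ A a u) :
    degree A u + degree A v + 4 ≤ 2 * Nat.card V + 2 * Mᶜ.ncard := by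
  set R := (Set.univ \ {u}) \ {v}
  have hdegu : degree A u ≤ degreeIn A u R :=
    (degree_eq_degreeIn_univ A u).le.trans
      ((degreeIn_le_degreeIn_sdiff_singleton (hirr u) (hirr u) _).trans
        (degreeIn_le_degreeIn_sdiff_singleton h₁ h₂ _))
  have hdegv : degree A v ≤ degreeIn A v R :=
    (degree_eq_degreeIn_univ A v).le.trans
      ((degreeIn_le_degreeIn_sdiff_singleton h₂ h₁ _).trans
        (degreeIn_le_degreeIn_sdiff_singleton (hirr v) (hirr v) _))
  have huRv := ncard_out_add_ncard_in_le (S := R) fun a _ => hpath₁ a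
  have hvRu := ncard_out_add_ncard_in_le (S := R) fun a _ => hpath₂ a
  have hM : (R \ M).ncard ≤ Mᶜ.ncard := Set.ncard_le_ncard fun a ha => ha.2
  have hu := Set.ncard_sdiff_singleton_add_one (Set.mem_univ u)
  have hv : R.ncard + 1 = _ := Set.ncard_sdiff_singleton_add_one ⟨Set.mem_univ v, huv.symm⟩
  rw [Set.ncard_univ] at hu
  unfold degreeIn at hdegu hdegv
  omega

theorem exists_isListCycle_superset [Nontrivial V] (hirr : ∀ x, ¬ A x x) (hstrong : IsStrong A)
    (hdeg : MeynielOn A M) (hM : Mᶜ.ncard ≤ 2) : ∃ C, IsListCycle A C ∧ ∀ v ∈ M, v ∈ C := by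
  obtain ⟨C, hmax⟩ := exists_isMaximalCycle hstrong M
  refine ⟨C, hmax.1, fun v hvM => ?_⟩
  by_contra hv
  have hfrom : ∀ x ∈ C, ∀ a ∈ M, a ∉ C → ¬ A x a := fun x hx a haM ha =>
    hmax.not_adj_of_notMem hirr hstrong hdeg hx haM ha
  have hto : ∀ x ∈ C, ∀ a ∈ M, a ∉ C → ¬ A a x := fun x hx a haM ha =>
    hmax.reverse.not_adj_of_notMem (A := Function.swap A) hirr hstrong.swap hdeg.swap
      (List.mem_reverse.2 hx) haM (mt List.mem_reverse.1 ha)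
  obtain ⟨u, huC, huM⟩ := hmax.exists_mem_of_notMem hstrong hvM hv
  have huv : u ≠ v := fun h => hv (h ▸ huC)
  have hupper := degree_add_degree_add_four_le (M := M) hirr huv (hfrom u huC v hvM hv)
    (hto u huC v hvM hv)
    (fun a haM hua hav => (em (a ∈ C)).elim (hfrom a · v hvM hv hav) (hfrom u huC a haM · hua))
    (fun a haM hva hau => (em (a ∈ C)).elim (hto a · v hvM hv hva) (hto u huC a haM · hau))
  have hlower := hdeg huM hvM huv (hfrom u huC v hvM hv) (hto u huC v hvM hv)
  -- `2n - 1 + |Mᶜ| ≤ d(u) + d(v) ≤ 2n - 4 + 2|Mᶜ|` forces `|Mᶜ| ≥ 3`.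
  omega

end Covering

theorem IsCycle.isHamiltonian {V : Type*} [Fintype V] {A : V → V → Prop} {m : ℕ} {c : Fin m → V}
    (hc : IsCycle A c) (hm : m = Fintype.card V) : IsHamiltonian A := by
  subst hm
  exact ⟨c, hc, ((Fintype.bijective_iff_injective_and_card c).2 ⟨hc.2.1, Fintype.card_fin _⟩).2⟩

theorem statement3_general {V : Type*} [Fintype V] [Nontrivial V] {A : V → V → Prop} {M : Set V}
    (hirr : ∀ x, ¬ A x x) (hstrong : IsStrong A) (hM : Mᶜ.ncard ≤ 1) (hdeg : MeynielOn A M) :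
    (IsHamiltonian A ∨ ∃ c : Fin (Fintype.card V - 1) → V, IsCycle A c) ∧
      ∃ (r : ℕ) (c : Fin r → V), IsCycle A c ∧ M ⊆ Set.range c := by
  obtain ⟨C, hC, hMC⟩ :=
    exists_isListCycle_superset hirr hstrong hdeg (hM.trans one_le_two)
  have hcycle := hC.isCycle_get hirr
  refine ⟨?_, C.length, C.get, hcycle, fun v hv => List.mem_iff_get.1 (hMC v hv)⟩
  have hle : C.length ≤ Fintype.card V := hC.nodup.length_le_card
  have hge : M.ncard ≤ C.length :=
    (Set.ncard_le_ncard hMC).trans_eq (ncard_setOf_mem_of_nodup hC.nodup)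
  have hcard := Set.ncard_add_ncard_compl M
  rw [Nat.card_eq_fintype_card] at hcard
  obtain hlen | hlen : C.length = Fintype.card V ∨ C.length = Fintype.card V - 1 := by omega
  · exact .inl (hcycle.isHamiltonian hlen)
  · exact .inr (hlen ▸ ⟨C.get, hcycle⟩)

/-- Let `D` be a strong digraph of order `n ≥ 3` in which `n - 1` vertices have degree
at least `n`.  Then `D` is Hamiltonian or contains a directed cycle of length `n - 1`;
moreover, `D` has a directed cycle containing all the vertices of degree at least `n`. -/
theorem statement3 {V : Type*} [Fintype V] [DecidableEq V] (A : V → V → Prop)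
    (hirr : Irreflexive A)
    (n : ℕ) (hn3 : 3 ≤ n) (hcard : Fintype.card V = n)
    (hstrong : IsStrong A)
    (z : V)
    (hdeg : ∀ v : V, v ≠ z → n ≤ degree A v) :
    (IsHamiltonian A ∨ ∃ c : Fin (n - 1) → V, IsCycle A c) ∧
      ∃ (r : ℕ) (c : Fin r → V), IsCycle A c ∧
        ∀ v : V, n ≤ degree A v → v ∈ Set.range c := by
  subst hcard
  have : Nontrivial V := Fintype.one_lt_card_iff_nontrivial.1 (by omega)
  have hM : {v | Fintype.card V ≤ degree A v}ᶜ.ncard ≤ 1 :=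
    Set.ncard_le_one_iff_subsingleton.2 (Set.subsingleton_of_subset_singleton (a := z)
      fun v hv => not_imp_comm.1 (hdeg v) hv)
  exact statement3_general hirr hstrong hM
    (meynielOn_of_card_le_degree (fun v hv => Nat.card_eq_fintype_card.trans_le hv) hM)
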